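/- arXiv:2007.11054 — 2 statements merged into one kernel-verified Lean document; each statement's English description precedes it below -/
import Mathlib

section
/- For every m ∈ ℕ^n, every x ∈ S_C(m) and every index 1 ≤ i ≤ n with m_i ≥ 1, there exists y ∈ S_C(e_i), where e_i ∈ ℕ^n is the i-th standard unit vector, such that y ≤ x componentwise and x − y ∈ S_C(m − e_i). (This is the type-C case of the paper's decomposition Proposition and its Corollary.) -/
open Finset
open scoped Pointwise

/-- The `i`-th standard unit vector (1-based coordinates, as a function `ℕ → ℕ`). -/
def unitVec (i : ℕ) : ℕ → ℕ := fun l => if l = i then 1 else 0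

/-- The lattice-point set `S_C(m)` of the polytope `P_w(λ)` in type `C_n`, where
`w = s_1 ⋯ s_{n-1} s_n s_{n-1} ⋯ s_1` and `λ = m_1 ω_1 + ⋯ + m_n ω_n`.
A point is a 1-based tuple `c_1, …, c_{2n-1}` of nonnegative integers (all other
coordinates vanish), subject to the Dyck-path inequalities (C1)–(C2), the degree-path
inequalities (C3) and the inequalities (C4) from paths with coefficients. -/
def SC (n : ℕ) (m : ℕ → ℕ) : Set (ℕ → ℕ) :=
  {c | (∀ l, (l = 0 ∨ 2 * n - 1 < l) → c l = 0) ∧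
    (∀ j, 1 ≤ j → j < n →
      ∑ l ∈ Icc 1 j, c l ≤ ∑ l ∈ Icc 1 j, m l) ∧
    ((∑ l ∈ Icc 1 (n - 1), c l) + c (2 * n - 1) ≤ ∑ l ∈ Icc 1 n, m l) ∧
    (∀ j, 2 ≤ j → j ≤ n →
      (∑ l ∈ Icc 1 (2 * n - j), c l) + c (2 * n - 1) ≤
        (∑ l ∈ Icc 1 (j - 1), m l) + 2 * ∑ l ∈ Icc j n, m l) ∧
    (∀ j k, 2 ≤ j → j ≤ n → j - 1 ≤ k → k < n →
      2 * (∑ l ∈ Icc 1 k, c l) + (∑ l ∈ Icc (k + 1) (2 * n - j), c l) + 2 * c (2 * n - 1) ≤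
        (∑ l ∈ Icc 1 (j - 1), m l) + 2 * (∑ l ∈ Icc j n, m l) + ∑ l ∈ Icc 1 k, m l)}

/-- The defining inequalities of `SC` in terms of prefix sums. -/
def PCond (n : ℕ) (X : ℕ → ℕ) (Z : ℕ) (M : ℕ → ℕ) : Prop :=
  (∀ j, 1 ≤ j → j < n → X j ≤ M j) ∧
  (X (n - 1) + Z ≤ M n) ∧
  (∀ p, 1 ≤ p → p < n → X (2 * n - 1 - p) + Z + M p ≤ 2 * M n) ∧
  (∀ p k, 1 ≤ p → p ≤ k → k < n →
    X k + X (2 * n - 1 - p) + 2 * Z + M p ≤ 2 * M n + M k)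

/-- Prefix sums. -/
def pre (c : ℕ → ℕ) (k : ℕ) : ℕ := ∑ l ∈ Icc 1 k, c l

theorem pre_zero (c : ℕ → ℕ) : pre c 0 = 0 := by simp [pre]

theorem pre_succ (c : ℕ → ℕ) (k : ℕ) : pre c (k + 1) = pre c k + c (k + 1) := by
  unfold pre
  rw [Finset.sum_Icc_succ_top (by omega)]

theorem pre_mono (c : ℕ → ℕ) : Monotone (pre c) :=
  monotone_nat_of_le_succ (fun k => by rw [pre_succ]; omega)

theorem pre_split (c : ℕ → ℕ) (a b : ℕ) (h : a ≤ b) :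
    pre c a + ∑ l ∈ Icc (a + 1) b, c l = pre c b := by
  induction b, h using Nat.le_induction with
  | base => simp
  | succ b hb ih => rw [pre_succ, ← ih, Finset.sum_Icc_succ_top (by omega)]; omega

theorem SC_iff (n : ℕ) (hn : 2 ≤ n) (m c : ℕ → ℕ) :
    c ∈ SC n m ↔ (∀ l, (l = 0 ∨ 2 * n - 1 < l) → c l = 0) ∧
      PCond n (pre c) (c (2 * n - 1)) (pre m) := by
  unfold SC PCond
  simp only [Set.mem_ofPred_eq]
  refine and_congr_right fun _ => and_congr_right fun _ => and_congr_right fun _ =>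
    and_congr ⟨fun h p h1 h2 => ?_, fun h j h1 h2 => ?_⟩
      ⟨fun h p k h1 h2 h3 => ?_, fun h j k h1 h2 h3 h4 => ?_⟩
  · have := h (p + 1) (by omega) (by omega)
    have e := pre_split m p n (by omega)
    rw [show 2 * n - (p + 1) = 2 * n - 1 - p by omega, show p + 1 - 1 = p by omega] at this
    change pre c _ + _ ≤ pre m _ + _ at this
    omega
  · have := h (j - 1) (by omega) (by omega)
    have e := pre_split m (j - 1) n (by omega)
    rw [show 2 * n - 1 - (j - 1) = 2 * n - j by omega] at this
    rw [show j - 1 + 1 = j by omega] at e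
    change pre c _ + _ ≤ pre m _ + _
    omega
  · have := h (p + 1) k (by omega) (by omega) (by omega) h3
    have e := pre_split m p n (by omega)
    have e2 := pre_split c k (2 * n - 1 - p) (by omega)
    rw [show 2 * n - (p + 1) = 2 * n - 1 - p by omega, show p + 1 - 1 = p by omega] at this
    change 2 * pre c _ + _ + _ ≤ pre m _ + _ + pre m _ at this
    omega
  · have := h (j - 1) k (by omega) (by omega) h4
    have e := pre_split m (j - 1) n (by omega)
    have e2 := pre_split c k (2 * n - j) (by omega)
    rw [show 2 * n - 1 - (j - 1) = 2 * n - j by omega] at this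
    rw [show j - 1 + 1 = j by omega] at e
    change 2 * pre c _ + _ + _ ≤ pre m _ + _ + pre m _
    omega

/-- Prefix sums of the greedy element. -/
def gY (n i : ℕ) (X : ℕ → ℕ) (k : ℕ) : ℕ :=
  if k < i then 0 else if k ≤ 2 * n - 1 - i then min 1 (X k - X (i - 1))
  else min 1 (X (2 * n - 1 - i) - X (i - 1)) +
    min (2 - min 1 (X (2 * n - 1 - i) - X (i - 1))) (X k - X (2 * n - 1 - i))

/-- Prefix sums of the unit vector. -/
def uV (i k : ℕ) : ℕ := if i ≤ k then 1 else 0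

theorem gY_lo {n i : ℕ} (X : ℕ → ℕ) {k : ℕ} (h : k < i) : gY n i X k = 0 := by simp [gY, h]

theorem gY_mid {n i : ℕ} (X : ℕ → ℕ) {k : ℕ} (h : i ≤ k) (h2 : k ≤ 2 * n - 1 - i) :
    gY n i X k = min 1 (X k - X (i - 1)) := by
  simp [gY, h2]; omega

theorem gY_hi {n i : ℕ} (X : ℕ → ℕ) {k : ℕ} (h : i ≤ k) (h2 : 2 * n - 1 - i < k) :
    gY n i X k = min 1 (X (2 * n - 1 - i) - X (i - 1)) +
    min (2 - min 1 (X (2 * n - 1 - i) - X (i - 1))) (X k - X (2 * n - 1 - i)) := by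
  unfold gY; rw [if_neg (by omega), if_neg (by omega)]

theorem uV_lo {i k : ℕ} (h : k < i) : uV i k = 0 := by simp [uV, h]
theorem uV_hi {i k : ℕ} (h : i ≤ k) : uV i k = 1 := by simp [uV, h]

/-- The greedy element lies in `SC n e_i`. -/
theorem gY_unit (n i : ℕ) (hi1 : 1 ≤ i) (hin : i ≤ n) (X : ℕ → ℕ) :
    PCond n (gY n i X) 0 (uV i) := by
  have hT : uV i n = 1 := uV_hi hin
  have lowk : ∀ k, k < n → gY n i X k ≤ uV i k := by
    intro k hk
    rcases lt_or_ge k i with h | h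
    · rw [gY_lo X h]; omega
    · rw [gY_mid X h (by omega), uV_hi h]; omega
  have hip : ∀ p, 1 ≤ p → p < n → gY n i X (2 * n - 1 - p) + uV i p ≤ 2 := by
    intro p h1 h2
    rcases lt_or_ge p i with h | h
    · rw [gY_hi X (by omega) (by omega), uV_lo h]; omega
    · rw [gY_mid X (by omega) (by omega), uV_hi h]; omega
  refine ⟨fun j _ h => lowk j h, ?_, ?_, ?_⟩
  · rcases lt_or_ge (n - 1) i with h | h
    · rw [gY_lo X h]; omega
    · rw [gY_mid X h (by omega)]; omega
  · intro p h1 h2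
    have := hip p h1 h2
    omega
  · intro p k h1 h2 h3
    have := hip p h1 (by omega)
    have := lowk k h3
    omega

/-- The last unit vector lies in `SC n e_i`. -/
theorem last_unit (n i : ℕ) (hin : i ≤ n) (X : ℕ → ℕ) (hX : ∀ k, k ≤ 2 * n - 2 → X k = 0) :
    PCond n X 1 (uV i) := by
  have hT : uV i n = 1 := uV_hi hin
  have hu : ∀ k, uV i k ≤ 1 := fun k => by unfold uV; split_ifs <;> omega
  refine ⟨fun j _ h => ?_, ?_, ?_, ?_⟩
  · rw [hX j (by omega)]; omega
  · rw [hX _ (by omega)]; omega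
  · intro p h1 h2
    have := hu p
    rw [hX _ (by omega)]; omega
  · intro p k h1 h2 h3
    have : uV i p ≤ uV i k := by unfold uV; split_ifs <;> omega
    rw [hX _ (by omega), hX _ (by omega)]; omega

theorem core (n i : ℕ) (hn : 2 ≤ n) (hi1 : 1 ≤ i) (hin : i ≤ n) (X M : ℕ → ℕ) (Z : ℕ)
    (hX : Monotone X) (hM : Monotone M) (hX0 : X 0 = 0) (hMi : M (i - 1) + 1 ≤ M i)
    (h : PCond n X Z M) :
    PCond n (fun k => X k - gY n i X k) Z (fun k => M k - uV i k) ∨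
    (1 ≤ Z ∧ PCond n X (Z - 1) (fun k => M k - uV i k)) := by
  obtain ⟨h1, h2, h3, h4⟩ := h
  have hT : uV i n = 1 := uV_hi hin
  have hMn := hM hin
  have hI : X (i - 1) ≤ M (i - 1) := by
    rcases Nat.eq_zero_or_pos (i - 1) with e | e
    · rw [e, hX0]; omega
    · exact h1 _ e (by omega)
  have hIn : X (i - 1) ≤ X (n - 1) := hX (by omega)
  have hnI : X (n - 1) ≤ X (2 * n - 1 - i) := hX (by omega)
  have h3i : X (2 * n - 1 - i) + Z + M i ≤ 2 * M n := by
    rcases Nat.lt_or_ge i n with e | e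
    · exact h3 i hi1 e
    · have : i = n := by omega
      subst this
      rw [show 2 * i - 1 - i = i - 1 by omega]; omega
  by_contra hc
  push Not at hc
  obtain ⟨ha, hb⟩ := hc
  -- either C2 fails in the extreme way, or C4 is tight
  have key : (X (n - 1) = X (i - 1) ∧ X (n - 1) + Z = M n) ∨
      (∃ p k, 1 ≤ p ∧ p ≤ k ∧ k < n ∧
        ¬ ((X k - gY n i X k) + (X (2 * n - 1 - p) - gY n i X (2 * n - 1 - p)) + 2 * Z +
          (M p - uV i p) ≤ 2 * (M n - uV i n) + (M k - uV i k))) := by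
    by_contra hk
    push Not at hk
    obtain ⟨k1, k2⟩ := hk
    apply ha
    refine ⟨?_, ?_, ?_, k2⟩
    · intro j hj1 hj2
      have := h1 j hj1 hj2
      dsimp only
      rcases lt_or_ge j i with e | e
      · rw [gY_lo X e, uV_lo e]; omega
      · rw [gY_mid X e (by omega), uV_hi e]
        have := hM e
        have := hX (show i - 1 ≤ j by omega)
        omega
    · dsimp only
      rcases lt_or_ge (n - 1) i with e | e
      · rw [gY_lo X e]
        have : i - 1 = n - 1 := by omega
        rw [this] at k1
        omega
      · rw [gY_mid X e (by omega)]
        omega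
    · intro p hp1 hp2
      dsimp only
      have := h3 p hp1 hp2
      rcases lt_or_ge p i with e | e
      · rw [gY_hi X (by omega) (by omega), uV_lo e]
        have := hX (show 2 * n - 1 - i ≤ 2 * n - 1 - p by omega)
        have := hM (show p ≤ i - 1 by omega)
        omega
      · rw [gY_mid X (by omega) (by omega), uV_hi e]
        have := hX (show n - 1 ≤ 2 * n - 1 - p by omega)
        have := hM (show p ≤ n by omega)
        have := hM e
        omega
  have key2 : (X (n - 1) = X (i - 1) ∧ X (n - 1) + Z = M n) ∨
      (∃ p k, i ≤ p ∧ p ≤ k ∧ k < n ∧ X k = X (i - 1) ∧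
        X k + X (2 * n - 1 - p) + 2 * Z + M p = 2 * M n + M k) := by
    rcases key with k1 | ⟨p, k, hp1, hpk, hkn, hf⟩
    · exact Or.inl k1
    by_cases k1 : X (n - 1) = X (i - 1) ∧ X (n - 1) + Z = M n
    · exact Or.inl k1
    right
    have t := h4 p k hp1 hpk hkn
    have m1 := hM hpk
    have m2 := hM (show k ≤ n by omega)
    have x1 := hX (show k ≤ n - 1 by omega)
    have x2 := hX (show n - 1 ≤ 2 * n - 1 - p by omega)
    rw [hT] at hf
    rcases lt_or_ge p i with e | e
    · have m3 := hM (show p ≤ i - 1 by omega)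
      have x3 := hX (show 2 * n - 1 - i ≤ 2 * n - 1 - p by omega)
      rw [gY_hi X (show i ≤ 2 * n - 1 - p by omega) (by omega), uV_lo e] at hf
      rcases lt_or_ge k i with f | f
      · rw [gY_lo X f, uV_lo f] at hf
        have x4 := hX (show k ≤ i - 1 by omega)
        have m4 := hM (show k ≤ i - 1 by omega)
        rcases Nat.lt_or_ge i n with g | g
        · have t2 := h4 i i hi1 le_rfl g
          have x5 := hX (show i - 1 ≤ i by omega)
          exact ⟨i, i, le_rfl, le_rfl, g, by omega, by omega⟩
        · have : i = n := by omega
          subst this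
          rw [show 2 * i - 1 - i = i - 1 by omega] at *
          omega
      · rw [gY_mid (n := n) X f (by omega), uV_hi f] at hf
        have t2 := h4 i k hi1 f hkn
        have t3 := h4 p (i - 1) hp1 (by omega) (by omega)
        have x4 := hX (show i - 1 ≤ k by omega)
        have m4 := hM f
        exact ⟨i, k, le_rfl, f, hkn, by omega, by omega⟩
    · rw [gY_mid X (show i ≤ k by omega) (by omega),
        gY_mid X (show i ≤ 2 * n - 1 - p by omega) (by omega), uV_hi e,
        uV_hi (show i ≤ k by omega)] at hf
      have x4 := hX (show i - 1 ≤ k by omega)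
      have m3 := hM e
      exact ⟨p, k, e, hpk, hkn, by omega, by omega⟩
  -- in all cases the last unit vector can be subtracted
  have crit : 1 ≤ Z ∧ M i ≤ X (i - 1) + Z ∧ (∀ j, i ≤ j → j < n → X j < M j) ∧
      (∀ p k, 1 ≤ p → p < i → i ≤ k → k < n →
        X k + X (2 * n - 1 - p) + 2 * Z + M p < 2 * M n + M k) := by
    rcases key2 with ⟨k1, k2⟩ | ⟨p, k, hip, hpk, hkn, k1, k2⟩
    · refine ⟨by omega, by omega, ?_, ?_⟩
      · intro j hj1 hj2
        have := hX (show j ≤ n - 1 by omega)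
        have := hM hj1
        omega
      · intro p k hp1 hpi hik hkn
        have := h4 p (i - 1) hp1 (by omega) (by omega)
        have := hX (show k ≤ n - 1 by omega)
        have := hM hik
        omega
    · have t3 := h3 p (by omega) (by omega)
      have mk := hM (show i ≤ k by omega)
      refine ⟨by omega, by omega, ?_, ?_⟩
      · intro j hj1 hj2
        have mj := hM hj1
        rcases Nat.lt_or_ge k j with g | g
        · have := h4 p j (by omega) (by omega) hj2
          omega
        · have := hX g
          omega
      · intro q l hq1 hqi hil hln
        have t4 := h4 q (i - 1) hq1 (by omega) (by omega)
        have ml := hM hil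
        rcases Nat.lt_or_ge k l with g | g
        · have := h4 p l (by omega) (by omega) hln
          omega
        · have := hX g
          omega
  obtain ⟨c1, c2, c3, c4⟩ := crit
  refine hb c1 ⟨?_, ?_, ?_, ?_⟩
  · intro j hj1 hj2
    dsimp only
    rcases lt_or_ge j i with e | e
    · rw [uV_lo e]; exact h1 j hj1 hj2
    · rw [uV_hi e]; have := c3 j e hj2; omega
  · dsimp only
    omega
  · intro p hp1 hp2
    dsimp only
    have := h3 p hp1 hp2
    rcases lt_or_ge p i with e | e
    · rw [uV_lo e]
      have := h4 p (i - 1) hp1 (by omega) (by omega)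
      omega
    · rw [uV_hi e]
      have := hM e
      omega
  · intro p k hp1 hpk hkn
    dsimp only
    have := h4 p k hp1 hpk hkn
    rcases lt_or_ge p i with e | e
    · rcases lt_or_ge k i with f | f
      · rw [uV_lo e, uV_lo f]; omega
      · rw [uV_lo e, uV_hi f]
        have := c4 p k hp1 e f hkn
        omega
    · rw [uV_hi e, uV_hi (show i ≤ k by omega)]
      have := hM e
      have := hM hpk
      omega

theorem pre_unit (i : ℕ) (hi1 : 1 ≤ i) : pre (unitVec i) = uV i := by
  funext k
  induction k with
  | zero => rw [pre_zero, uV_lo (by omega)]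
  | succ k ih => rw [pre_succ, ih]; unfold uV unitVec; split_ifs <;> omega

theorem pre_sub (x y : ℕ → ℕ) (h : y ≤ x) (k : ℕ) :
    pre y k ≤ pre x k ∧ pre (x - y) k = pre x k - pre y k := by
  induction k with
  | zero => simp [pre_zero]
  | succ k ih =>
    have : y (k + 1) ≤ x (k + 1) := h (k + 1)
    rw [pre_succ, pre_succ, pre_succ, ih.2, Pi.sub_apply]
    omega

theorem PCond_congr {n Z : ℕ} {X X' M : ℕ → ℕ} (hn : 2 ≤ n)
    (hX : ∀ k, k ≤ 2 * n - 2 → X k = X' k) (h : PCond n X Z M) : PCond n X' Z M := by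
  obtain ⟨h1, h2, h3, h4⟩ := h
  refine ⟨fun j a b => ?_, ?_, fun p a b => ?_, fun p k a b c => ?_⟩
  · rw [← hX _ (by omega)]; exact h1 j a b
  · rw [← hX _ (by omega)]; exact h2
  · rw [← hX _ (by omega)]; exact h3 p a b
  · rw [← hX _ (by omega), ← hX _ (by omega)]; exact h4 p k a b c

/-- Monotonicity of the greedy prefix sums and of their complement. -/
theorem gY_step (n i : ℕ) (hi1 : 1 ≤ i) (hin : i ≤ n) (X : ℕ → ℕ) (hX : Monotone X) (k : ℕ) :
    gY n i X k ≤ gY n i X (k + 1) ∧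
      gY n i X (k + 1) - gY n i X k ≤ X (k + 1) - X k := by
  have x1 := hX (show k ≤ k + 1 by omega)
  rcases lt_or_ge (k + 1) i with e | e
  · rw [gY_lo X e, gY_lo X (by omega)]; omega
  have x2 := hX (show i - 1 ≤ k by omega)
  have x3 := hX (show i - 1 ≤ 2 * n - 1 - i by omega)
  rcases Nat.lt_or_ge k i with f | f
  · have : k = i - 1 := by omega
    rw [gY_lo X f]
    rw [← this] at x3
    rcases Nat.lt_or_ge (2 * n - 1 - i) (k + 1) with g | g
    · rw [gY_hi X e g, ← this]
      rw [show 2 * n - 1 - i = k by omega]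
      omega
    · rw [gY_mid X e g, ← this]; omega
  · rcases Nat.lt_or_ge (2 * n - 1 - i) k with g | g
    · rw [gY_hi X e (by omega), gY_hi X f g]
      have := hX g.le
      omega
    · rw [gY_mid X f g]
      rcases Nat.lt_or_ge (2 * n - 1 - i) (k + 1) with g2 | g2
      · rw [gY_hi X e g2]
        have : 2 * n - 1 - i = k := by omega
        rw [this]
        omega
      · rw [gY_mid X e g2]; omega

/-- Decomposition property in type `C`: any point of `S_C(m)` with `m_i ≥ 1` can be reduced
by a point of `S_C(e_i)` to a point of `S_C(m - e_i)`. -/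
theorem SC_decomposition (n : ℕ) (hn : 2 ≤ n) (m : ℕ → ℕ) (i : ℕ) (hi1 : 1 ≤ i) (hin : i ≤ n)
    (hmi : 1 ≤ m i) (x : ℕ → ℕ) (hx : x ∈ SC n m) :
    ∃ y ∈ SC n (unitVec i), y ≤ x ∧ x - y ∈ SC n (m - unitVec i) := by
  rw [SC_iff n hn] at hx
  obtain ⟨hs, hc⟩ := hx
  have hu : unitVec i ≤ m := by
    intro l
    unfold unitVec
    split_ifs with h
    · subst h; exact hmi
    · exact Nat.zero_le _
  have hMi : pre m (i - 1) + 1 ≤ pre m i := by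
    have := pre_succ m (i - 1)
    rw [show i - 1 + 1 = i by omega] at this
    omega
  have hpm : pre (m - unitVec i) = fun k => pre m k - uV i k := by
    funext k
    rw [(pre_sub m (unitVec i) hu k).2, pre_unit i hi1]
  rcases core n i hn hi1 hin (pre x) (pre m) (x (2 * n - 1)) (pre_mono x) (pre_mono m)
    (pre_zero x) hMi hc with h | ⟨hz, h⟩
  · let y : ℕ → ℕ := fun l => if 1 ≤ l ∧ l ≤ 2 * n - 2 then
      gY n i (pre x) l - gY n i (pre x) (l - 1) else 0
    have hy : ∀ k, k ≤ 2 * n - 2 → pre y k = gY n i (pre x) k := by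
      intro k
      induction k with
      | zero => intro _; rw [pre_zero, gY_lo _ (by omega)]
      | succ k ih =>
        intro hk
        have hyk : y (k + 1) = gY n i (pre x) (k + 1) - gY n i (pre x) k :=
          if_pos ⟨by omega, hk⟩
        have := (gY_step n i hi1 hin (pre x) (pre_mono x) k).1
        rw [pre_succ, ih (by omega), hyk]
        omega
    have hyx : y ≤ x := by
      intro l
      change (if 1 ≤ l ∧ l ≤ 2 * n - 2 then
        gY n i (pre x) l - gY n i (pre x) (l - 1) else 0) ≤ x l
      split_ifs with hl
      · have h2 := (gY_step n i hi1 hin (pre x) (pre_mono x) (l - 1)).2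
        have h3 := pre_succ x (l - 1)
        rw [show l - 1 + 1 = l by omega] at h2 h3
        omega
      · exact Nat.zero_le _
    have hyl : y (2 * n - 1) = 0 := if_neg (by omega)
    refine ⟨y, ?_, hyx, ?_⟩
    · rw [SC_iff n hn, pre_unit i hi1, hyl]
      exact ⟨fun l hl => if_neg (by omega),
        PCond_congr hn (fun k hk => (hy k hk).symm) (gY_unit n i hi1 hin (pre x))⟩
    · rw [SC_iff n hn, hpm, Pi.sub_apply, hyl]
      refine ⟨fun l hl => ?_, PCond_congr hn (fun k hk => ?_) h⟩
      · rw [Pi.sub_apply, hs l hl, Nat.zero_sub]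
      · rw [(pre_sub x y hyx k).2, hy k hk]
  · have hyx : unitVec (2 * n - 1) ≤ x := by
      intro l
      unfold unitVec
      split_ifs with hl
      · subst hl; exact hz
      · exact Nat.zero_le _
    have hyl : unitVec (2 * n - 1) (2 * n - 1) = 1 := if_pos rfl
    have hp : ∀ k, k ≤ 2 * n - 2 → pre (unitVec (2 * n - 1)) k = 0 := by
      intro k hk
      rw [pre_unit _ (by omega), uV_lo (by omega)]
    refine ⟨unitVec (2 * n - 1), ?_, hyx, ?_⟩
    · rw [SC_iff n hn, pre_unit i hi1, hyl]
      exact ⟨fun l hl => if_neg (by omega), last_unit n i hin _ hp⟩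
    · rw [SC_iff n hn, hpm, Pi.sub_apply, hyl]
      refine ⟨fun l hl => ?_, PCond_congr hn (fun k hk => ?_) h⟩
      · rw [Pi.sub_apply, hs l hl, Nat.zero_sub]
      · rw [(pre_sub x _ hyx k).2, hp k hk, Nat.sub_zero]
end

section
/- For every m ∈ ℕ^n, every x ∈ S_D(m) and every index 1 ≤ i ≤ n with m_i ≥ 1, there exists y ∈ S_D(e_i), where e_i ∈ ℕ^n is the i-th standard unit vector, such that y ≤ x componentwise and x − y ∈ S_D(m − e_i). (This is the type-D case of the paper's decomposition Proposition and its Corollary.) -/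
open Finset
open scoped Pointwise

/-- The quantity `Q_d(m) = (m_1 + ⋯ + m_{d-1}) + 2(m_d + ⋯ + m_{n-2}) + m_{n-1} + m_n`
appearing in the type-`D` inequalities. -/
def QD (n : ℕ) (m : ℕ → ℕ) (d : ℕ) : ℕ :=
  (∑ l ∈ Icc 1 (d - 1), m l) + 2 * (∑ l ∈ Icc d (n - 2), m l) + m (n - 1) + m n

/-- The lattice-point set `S_D(m)` of the polytope `P_w(λ)` in type `D_n`, where
`w = s_1 ⋯ s_{n-1} s_n s_{n-2} ⋯ s_1` and `λ = m_1 ω_1 + ⋯ + m_n ω_n`.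
A point is a triple `(a, b, d)` where `a` is the 1-based tuple `a_1, …, a_{n-1}`,
`b ∈ ℕ` and `d` is the 1-based tuple `d_2, …, d_{n-1}` (all other coordinates vanish),
subject to the Dyck-path inequalities (D1)–(D4), the degree-path inequalities (D5)–(D6)
and the inequalities (D7) from paths with coefficients. -/
def SD (n : ℕ) (m : ℕ → ℕ) : Set ((ℕ → ℕ) × ℕ × (ℕ → ℕ)) :=
  {x | (∀ l, (l = 0 ∨ n - 1 < l) → x.1 l = 0) ∧
    (∀ l, (l ≤ 1 ∨ n - 1 < l) → x.2.2 l = 0) ∧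
    (∀ j, 1 ≤ j → j ≤ n - 1 →
      ∑ l ∈ Icc 1 j, x.1 l ≤ ∑ l ∈ Icc 1 j, m l) ∧
    ((∑ l ∈ Icc 1 (n - 2), x.1 l) + x.2.1 ≤ (∑ l ∈ Icc 1 (n - 2), m l) + m n) ∧
    ((∑ l ∈ Icc 1 (n - 1), x.1 l) + x.2.2 (n - 1) ≤ ∑ l ∈ Icc 1 n, m l) ∧
    ((∑ l ∈ Icc 1 (n - 2), x.1 l) + x.2.1 + x.2.2 (n - 1) ≤ ∑ l ∈ Icc 1 n, m l) ∧
    (∀ d, 2 ≤ d → d ≤ n - 2 →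
      (∑ l ∈ Icc 1 (n - 1), x.1 l) + ∑ l ∈ Icc d (n - 1), x.2.2 l ≤ QD n m d) ∧
    (∀ d, 2 ≤ d → d ≤ n - 2 →
      (∑ l ∈ Icc 1 (n - 2), x.1 l) + x.2.1 + ∑ l ∈ Icc d (n - 1), x.2.2 l ≤ QD n m d) ∧
    (∀ d k, 2 ≤ d → d ≤ n - 1 → d - 1 ≤ k → k ≤ n - 2 →
      2 * (∑ l ∈ Icc 1 k, x.1 l) + (∑ l ∈ Icc (k + 1) (n - 1), x.1 l) + x.2.1 +
          ∑ l ∈ Icc d (n - 1), x.2.2 l ≤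
        QD n m d + ∑ l ∈ Icc 1 k, m l)}

/-- The reformulated system of inequalities. -/
def GoodS (N : ℕ) (s E : ℕ → ℤ) (a b p q : ℤ) : Prop :=
  (∀ k, k ≤ N → 0 ≤ s k) ∧ a ≤ s N + p ∧ b ≤ s N + q ∧
    ∀ d, 2 ≤ d → d ≤ N + 1 → E d ≤ a ∧ E d ≤ b ∧ ∀ k, d ≤ k + 1 → k ≤ N → E d ≤ s k

/-- Data with recursions. -/
structure Dat (N i : ℕ) (s E : ℕ → ℤ) (a b p q : ℤ) (av dv mv : ℕ → ℕ) : Prop where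
  hN : 2 ≤ N
  s0 : s 0 = 0
  srec : ∀ k, k < N → s (k + 1) = s k + mv (k + 1) - av (k + 1)
  Erec : ∀ d, d ≤ N → E d = E (d + 1) + dv d - mv d
  Etop : E (N + 1) = dv (N + 1) + a + b - p - q - s N
  a0 : 0 ≤ a
  b0 : 0 ≤ b
  p0 : 0 ≤ p
  q0 : 0 ≤ q
  good : GoodS N s E a b p q

/-- `s`-vector of the candidate. -/
def sY (i j : ℕ) : ℕ → ℤ := fun k => (if i ≤ k then 1 else 0) - (if j ≤ k then 1 else 0)

/-- `E`-vector of the candidate. -/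
def eY (N i j : ℕ) (α β : ℤ) (l l' : ℕ) : ℕ → ℤ := fun d =>
  (if d ≤ l then 1 else 0) + (if d ≤ l' then 1 else 0) + (if j ≤ N then 1 else 0) + α + β - 1
    - (if d ≤ i ∧ i ≤ N then 1 else 0)

/-- The conclusion of the combinatorial core. -/
def Concl (N i : ℕ) (s E : ℕ → ℤ) (a b p q : ℤ) (av dv : ℕ → ℕ) : Prop :=
  ∃ (j : ℕ) (α β : ℕ) (l l' : ℕ), 1 ≤ j ∧ j ≤ N + 1 ∧ (j ≤ N → 1 ≤ av j) ∧
    (α : ℤ) ≤ a ∧ (β : ℤ) ≤ b ∧ l ≤ N + 1 ∧ l' ≤ N + 1 ∧ (2 ≤ l → 1 ≤ dv l) ∧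
    (2 ≤ l' → 1 ≤ dv l') ∧ (2 ≤ l → l = l' → 2 ≤ dv l) ∧
    GoodS N (sY i j) (eY N i j α β l l') α β (if i = N + 1 then 1 else 0)
      (if i = N + 2 then 1 else 0) ∧
    GoodS N (fun k => s k - sY i j k) (fun d => E d - eY N i j α β l l' d) (a - α) (b - β)
      (p - (if i = N + 1 then 1 else 0)) (q - (if i = N + 2 then 1 else 0))

theorem exists_greatest (dv : ℕ → ℕ) (U : ℕ) :
    ∃ l, l ≤ U ∧ (2 ≤ l → 1 ≤ dv l) ∧ ∀ k, l < k → k ≤ U → 2 ≤ k → dv k = 0 := by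
  induction U with
  | zero => exact ⟨0, le_refl _, by omega, by omega⟩
  | succ U ih =>
    by_cases h : 1 ≤ dv (U + 1)
    · exact ⟨U + 1, le_refl _, fun _ => h, by omega⟩
    · obtain ⟨l, h1, h2, h3⟩ := ih
      refine ⟨l, by omega, h2, fun k hk hk2 hk3 => ?_⟩
      rcases Nat.lt_or_ge k (U + 1) with h4 | h4
      · exact h3 k hk (by omega) hk3
      · have : k = U + 1 := by omega
        subst this; omega

theorem exists_least (av : ℕ → ℕ) (N i : ℕ) (hi : 1 ≤ i) (hiN : i ≤ N) :
    ∃ j, i ≤ j ∧ j ≤ N + 1 ∧ (j ≤ N → 1 ≤ av j) ∧ ∀ k, i ≤ k → k < j → av k = 0 := by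
  classical
  have hex : ∃ j, i ≤ j ∧ (1 ≤ av j ∨ j = N + 1) := ⟨N + 1, by omega, Or.inr rfl⟩
  refine ⟨Nat.find hex, (Nat.find_spec hex).1, Nat.find_min' hex ⟨by omega, Or.inr rfl⟩, ?_, ?_⟩
  · intro h
    rcases (Nat.find_spec hex).2 with h1 | h1
    · exact h1
    · omega
  · intro k hk hk2
    have := Nat.find_min hex hk2
    by_contra hne
    exact this ⟨hk, Or.inl (by omega)⟩

section
variable {N i : ℕ} {s E : ℕ → ℤ} {a b p q : ℤ} {av dv mv : ℕ → ℕ}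

/-- On a range where the `a`'s vanish, `s` is monotone. -/
theorem Dat.smono (H : Dat N i s E a b p q av dv mv) (u : ℕ) (k : ℕ) (huk : u ≤ k) (hk : k ≤ N)
    (hz : ∀ t, u < t → t ≤ k → av t = 0) : s u ≤ s k := by
  induction k, huk using Nat.le_induction with
  | base => exact le_refl _
  | succ k hk' ih =>
    have h1 := ih (by omega) (fun t h1 h2 => hz t h1 (by omega))
    have h2 := H.srec k (by omega)
    have h3 := hz (k + 1) (by omega) (le_refl _)
    rw [h3] at h2; push_cast at h2; omega

/-- Downward propagation of slack `c` through zeros of `dv`. -/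
theorem Dat.down (H : Dat N i s E a b p q av dv mv) (c B : ℤ) (u : ℕ) (hu : u ≤ N + 1)
    (hB : E u ≤ B)
    (hc : ∀ k, u ≤ k + 1 → k ≤ N → E u + c ≤ s k) (d : ℕ) (hd : 1 ≤ d) (hdu : d ≤ u)
    (hz : ∀ t, d ≤ t → t < u → dv t = 0) :
    E d ≤ B ∧ ∀ k, d ≤ k + 1 → k ≤ N → E d + c ≤ s k := by
  induction hdu using Nat.decreasingInduction with
  | self => exact ⟨hB, hc⟩
  | of_succ d hdu ih =>
    obtain ⟨h1, h2⟩ := ih (by omega) (fun t h1 h2 => hz t (by omega) h2)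
    have h3 := H.Erec d (by omega)
    rw [hz d (le_refl _) (by omega)] at h3
    push_cast at h3
    refine ⟨by omega, fun k hk hkN => ?_⟩
    rcases Nat.lt_or_ge k d with h4 | h4
    · have h5 := H.srec k (by omega)
      have h6 : k + 1 = d := by omega
      have h7 := h2 d (by omega) (by omega)
      rw [h6] at h5
      omega
    · have := h2 k (by omega) hkN
      omega

theorem Dat.s_strict (H : Dat N i s E a b p q av dv mv) (hi : 1 ≤ i) (hmi : 1 ≤ mv i)
    {j : ℕ} (hz : ∀ k, i ≤ k → k < j → av k = 0) (k : ℕ) (hk : i ≤ k) (hkj : k < j) (hkN : k ≤ N) :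
    s (i - 1) + mv i ≤ s k := by
  have h1 := H.smono i k hk hkN (fun t h1 h2 => hz t (by omega) (by omega))
  have h2 := H.srec (i - 1) (by omega)
  rw [show i - 1 + 1 = i by omega, hz i le_rfl (by omega)] at h2
  push_cast at h2; omega

/-- Case A: remove `a_{n-1}` and `b`. -/
theorem caseA (H : Dat N i s E a b p q av dv mv) (hi : 1 ≤ i) (hiN : i ≤ N) (hmi : 1 ≤ mv i)
    {j : ℕ} (hij : i ≤ j) (hjN : j ≤ N + 1) (hz : ∀ k, i ≤ k → k < j → av k = 0)
    (d : ℕ) (hid : i < d) (hdj : d ≤ j) (hE : E d = s (d - 1)) :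
    Concl N i s E a b p q av dv := by
  obtain ⟨g1, g2, g3, g4⟩ := H.good
  have hN := H.hN
  have hst := H.s_strict hi hmi hz
  have e1 := hst (d - 1) (by omega) (by omega) (by omega)
  have e2 := g1 (i - 1) (by omega)
  obtain ⟨f1, f2, f3⟩ := g4 d (by omega) (by omega)
  have hs : ∀ k, i ≤ k → k ≤ N → s (i - 1) + 1 ≤ s k := by
    intro k h1 h2
    rcases Nat.lt_or_ge k (d - 1) with h | h
    · have := hst k h1 (by omega) h2; omega
    · have := f3 k (by omega) h2; omega
  refine ⟨N + 1, 1, 1, 0, 0, by omega, by omega, by omega, by push_cast; omega,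
    by push_cast; omega, by omega, by omega, by omega, by omega, by omega, ?_, ?_⟩
  · refine ⟨fun k hk => ?_, ?_, ?_, fun d hd1 hd2 => ⟨?_, ?_, fun k h1 h2 => ?_⟩⟩ <;>
      simp only [sY, eY] <;> split_ifs <;> push_cast <;> omega
  · refine ⟨fun k hk => ?_, ?_, ?_, fun d' hd1 hd2 => ?_⟩
    · have := g1 k hk
      by_cases h : i ≤ k
      · have := hs k h hk
        simp only [sY]; split_ifs <;> omega
      · simp only [sY]; split_ifs <;> omega
    · simp only [sY]; split_ifs <;> push_cast <;> omega
    · simp only [sY]; split_ifs <;> push_cast <;> omega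
    · obtain ⟨t1, t2, t3⟩ := g4 d' hd1 hd2
      have t4 : d' ≤ i → E d' ≤ s (i - 1) := fun h => t3 (i - 1) (by omega) (by omega)
      refine ⟨?_, ?_, fun k h1 h2 => ?_⟩
      · simp only [eY]; split_ifs <;> push_cast <;> omega
      · simp only [eY]; split_ifs <;> push_cast <;> omega
      · have := t3 k h1 h2
        have := hs k
        simp only [eY, sY]; split_ifs <;> push_cast <;> omega

/-- Case B: remove `a_j` and possibly `d_l`. -/
theorem caseB (H : Dat N i s E a b p q av dv mv) (hi : 1 ≤ i) (hiN : i ≤ N) (hmi : 1 ≤ mv i)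
    {j : ℕ} (hij : i ≤ j) (hjN : j ≤ N) (haj : 1 ≤ av j) (hz : ∀ k, i ≤ k → k < j → av k = 0)
    (hne : ∀ d, i < d → d ≤ j → E d ≠ s (d - 1)) :
    Concl N i s E a b p q av dv := by
  obtain ⟨g1, g2, g3, g4⟩ := H.good
  have hN := H.hN
  have hst := H.s_strict hi hmi hz
  have e2 := g1 (i - 1) (by omega)
  obtain ⟨l, hl1, hl2, hl3⟩ := exists_greatest dv i
  
  have hslack : ∀ d, l < d → d ≤ i → 2 ≤ d →
      E d + 1 ≤ a ∧ E d + 1 ≤ b ∧ ∀ k, d ≤ k + 1 → k ≤ N → E d + 1 ≤ s k := by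
    intro d h1 h2 h3
    have z := hl3 i (by omega) (by omega) (by omega)
    have r := H.Erec i hiN
    rw [z] at r
    push_cast at r
    obtain ⟨t1, t2, t3⟩ := g4 (i + 1) (by omega) (by omega)
    have r2 := H.srec (i - 1) (by omega)
    rw [show i - 1 + 1 = i by omega] at r2
    have t4 := t3 i (by omega) (by omega)
    have key : E i + 1 ≤ s (i - 1) := by
      rcases Nat.lt_or_ge i j with h | h
      · have := hne (i + 1) (by omega) (by omega)
        rw [show i + 1 - 1 = i by omega] at this
        rw [hz i le_rfl h] at r2
        push_cast at r2
        omega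
      · have : i = j := by omega
        subst this
        omega
    have q1 := H.down 1 (min a b - 1) i (by omega) (by omega) (fun k h4 h5 => by
      rcases Nat.lt_or_ge k i with h | h
      · have : k = i - 1 := by omega
        subst this; exact key
      · have := t3 k (by omega) h5
        omega) d (by omega) h2 (fun t h4 h5 => hl3 t (by omega) (by omega) (by omega))
    exact ⟨by omega, by omega, q1.2⟩
  refine ⟨j, 0, 0, l, 0, by omega, by omega, fun _ => haj, by push_cast; exact H.a0,
    by push_cast; exact H.b0, by omega, by omega, hl2, by omega, by omega, ?_, ?_⟩
  · refine ⟨fun k hk => ?_, ?_, ?_, fun d hd1 hd2 => ⟨?_, ?_, fun k h1 h2 => ?_⟩⟩ <;>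
      simp only [sY, eY] <;> split_ifs <;> push_cast <;> omega
  · refine ⟨fun k hk => ?_, ?_, ?_, fun d' hd1 hd2 => ?_⟩
    · have := g1 k hk
      have := hst k
      simp only [sY]; split_ifs <;> omega
    · simp only [sY]; split_ifs <;> push_cast <;> omega
    · simp only [sY]; split_ifs <;> push_cast <;> omega
    · obtain ⟨t1, t2, t3⟩ := g4 d' hd1 hd2
      have t4 : d' ≤ i → E d' ≤ s (i - 1) := fun h => t3 (i - 1) (by omega) (by omega)
      have t5 := hslack d'
      refine ⟨?_, ?_, fun k h1 h2 => ?_⟩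
      · simp only [eY]; split_ifs <;> push_cast <;> omega
      · simp only [eY]; split_ifs <;> push_cast <;> omega
      · have u1 := t3 k h1 h2
        have u2 := hst k
        have u3 : l < d' → d' ≤ i → E d' + 1 ≤ s k := fun h3 h4 => (t5 h3 h4 hd1).2.2 k h1 h2
        have u4 : l < d' → d' ≤ i → E d' + 1 ≤ s (i - 1) :=
          fun h3 h4 => (t5 h3 h4 hd1).2.2 (i - 1) (by omega) (by omega)
        have u5 : i < d' → k < j → E d' + 1 ≤ s k := by
          intro h3 h4
          have v1 := hne d' h3 (by omega)
          have v2 := t3 (d' - 1) (by omega) (by omega)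
          have v3 := H.smono (d' - 1) k (by omega) h2 (fun t w1 w2 => hz t (by omega) (by omega))
          omega
        simp only [eY, sY]; split_ifs <;> push_cast <;> omega

/-- Case C, removal of `a_{n-1}` or `b` (flags `α + β = 1`) and possibly `d_l`. -/
theorem caseC1 (H : Dat N i s E a b p q av dv mv) (hi : 1 ≤ i) (hiN : i ≤ N) (hmi : 1 ≤ mv i)
    (hz : ∀ k, i ≤ k → k < N + 1 → av k = 0)
    (hne : ∀ d, i < d → d ≤ N + 1 → E d ≠ s (d - 1))
    (α β : ℕ) (hαβ : α + β = 1) (hαa : (α : ℤ) ≤ a) (hβb : (β : ℤ) ≤ b)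
    (hEa : ∀ d, 2 ≤ d → d ≤ N + 1 → E d ≤ a - α) (hEb : ∀ d, 2 ≤ d → d ≤ N + 1 → E d ≤ b - β)
    (hsa : a + β ≤ s N + p) (hsb : b + α ≤ s N + q) :
    Concl N i s E a b p q av dv := by
  obtain ⟨g1, g2, g3, g4⟩ := H.good
  have hN := H.hN
  have hst := H.s_strict hi hmi hz
  have e2 := g1 (i - 1) (by omega)
  have hne' : ∀ d, i < d → d ≤ N + 1 → ∀ k, d ≤ k + 1 → k ≤ N → E d + 1 ≤ s k := by
    intro d h1 h2 k h3 h4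
    have v1 := hne d h1 h2
    have v2 := (g4 d (by omega) h2).2.2 (d - 1) (by omega) (by omega)
    have v3 := H.smono (d - 1) k (by omega) h4 (fun t w1 w2 => hz t (by omega) (by omega))
    omega
  obtain ⟨l, hl1, hl2, hl3⟩ := exists_greatest dv i
  have hslack : ∀ d, l < d → d ≤ i → 2 ≤ d →
      E d + 1 ≤ a - α ∧ E d + 1 ≤ b - β ∧ ∀ k, d ≤ k + 1 → k ≤ N → E d + 1 ≤ s k := by
    intro d h1 h2 h3
    have z := hl3 i (by omega) (by omega) (by omega)
    have r := H.Erec i hiN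
    rw [z] at r
    push_cast at r
    have t1 := hEa (i + 1) (by omega) (by omega)
    have t2 := hEb (i + 1) (by omega) (by omega)
    have t3 := hne' (i + 1) (by omega) (by omega)
    have r2 := H.srec (i - 1) (by omega)
    rw [show i - 1 + 1 = i by omega, hz i le_rfl (by omega)] at r2
    push_cast at r2
    have t4 := t3 i (by omega) (by omega)
    have q1 := H.down 1 (min (a - α) (b - β) - 1) i (by omega) (by omega) (fun k h4 h5 => by
      rcases Nat.lt_or_ge k i with h | h
      · have : k = i - 1 := by omega
        subst this; omega
      · have := t3 k (by omega) h5
        omega) d (by omega) h2 (fun t h4 h5 => hl3 t (by omega) (by omega) (by omega))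
    exact ⟨by omega, by omega, q1.2⟩
  refine ⟨N + 1, α, β, l, 0, by omega, by omega, by omega, hαa, hβb, by omega, by omega, hl2,
    by omega, by omega, ?_, ?_⟩
  · refine ⟨fun k hk => ?_, ?_, ?_, fun d hd1 hd2 => ⟨?_, ?_, fun k h1 h2 => ?_⟩⟩ <;>
      simp only [sY, eY] <;> split_ifs <;> push_cast <;> omega
  · refine ⟨fun k hk => ?_, ?_, ?_, fun d' hd1 hd2 => ?_⟩
    · have := g1 k hk
      have := hst k
      simp only [sY]; split_ifs <;> omega
    · simp only [sY]; split_ifs <;> omega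
    · simp only [sY]; split_ifs <;> omega
    · obtain ⟨t1, t2, t3⟩ := g4 d' hd1 hd2
      have t4 : d' ≤ i → E d' ≤ s (i - 1) := fun h => t3 (i - 1) (by omega) (by omega)
      have t5 := hslack d'
      have t6 := hEa d' hd1 hd2
      have t7 := hEb d' hd1 hd2
      refine ⟨?_, ?_, fun k h1 h2 => ?_⟩
      · simp only [eY]; split_ifs <;> omega
      · simp only [eY]; split_ifs <;> omega
      · have u1 := t3 k h1 h2
        have u2 := hst k
        have u3 : l < d' → d' ≤ i → E d' + 1 ≤ s k := fun h3 h4 => (t5 h3 h4 hd1).2.2 k h1 h2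
        have u4 : l < d' → d' ≤ i → E d' + 1 ≤ s (i - 1) :=
          fun h3 h4 => (t5 h3 h4 hd1).2.2 (i - 1) (by omega) (by omega)
        have u5 : i < d' → E d' + 1 ≤ s k := fun h => hne' d' h hd2 k h1 h2
        simp only [eY, sY]; split_ifs <;> omega

/-- Case C, removal of `d`'s only. -/
theorem caseC2 (H : Dat N i s E a b p q av dv mv) (hi : 1 ≤ i) (hiN : i ≤ N) (hmi : 1 ≤ mv i)
    (hz : ∀ k, i ≤ k → k < N + 1 → av k = 0)
    (hne : ∀ d, i < d → d ≤ N + 1 → E d ≠ s (d - 1))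
    (hab : a = b) (hsa : a + 1 ≤ s N + p) (hsb : b + 1 ≤ s N + q) :
    Concl N i s E a b p q av dv := by
  obtain ⟨g1, g2, g3, g4⟩ := H.good
  have hN := H.hN
  have hst := H.s_strict hi hmi hz
  have e2 := g1 (i - 1) (by omega)
  have hne' : ∀ d, i < d → d ≤ N + 1 → ∀ k, d ≤ k + 1 → k ≤ N → E d + 1 ≤ s k := by
    intro d h1 h2 k h3 h4
    have v1 := hne d h1 h2
    have v2 := (g4 d (by omega) h2).2.2 (d - 1) (by omega) (by omega)
    have v3 := H.smono (d - 1) k (by omega) h4 (fun t w1 w2 => hz t (by omega) (by omega))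
    omega
  have htop := H.Etop
  have hp := H.p0
  have hq := H.q0
  have hEN := hne' (N + 1) (by omega) le_rfl N le_rfl le_rfl
  obtain ⟨l', hl1', hl2', hl3'⟩ := exists_greatest dv (N + 1)

  have hslack' : ∀ d, l' < d → d ≤ N + 1 → 2 ≤ d →
      E d + 1 ≤ a ∧ ∀ k, d ≤ k + 1 → k ≤ N → E d + 2 ≤ s k := by
    intro d h1 h2 h3
    have z := hl3' (N + 1) (by omega) le_rfl (by omega)
    rw [z] at htop
    push_cast at htop
    have q1 := H.down 2 (a - 1) (N + 1) le_rfl (by omega) (fun k h4 h5 => by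
      have : k = N := by omega
      subst this; omega) d (by omega) h2 (fun t h4 h5 => hl3' t (by omega) (by omega) (by omega))
    exact ⟨by omega, q1.2⟩
  rcases Nat.lt_or_ge i l' with hil | hil
  · -- first case
    obtain ⟨l, hl1, hl2, hl3⟩ := exists_greatest dv i
    have hslack : ∀ d, l < d → d ≤ i → 2 ≤ d →
        E d + 1 ≤ a ∧ ∀ k, d ≤ k + 1 → k ≤ N → E d + 1 ≤ s k := by
      intro d h1 h2 h3
      have z := hl3 i (by omega) (by omega) (by omega)
      have r := H.Erec i hiN
      rw [z] at r
      push_cast at r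
      have t1 := (g4 (i + 1) (by omega) (by omega)).1
      have t3 := hne' (i + 1) (by omega) (by omega)
      have r2 := H.srec (i - 1) (by omega)
      rw [show i - 1 + 1 = i by omega, hz i le_rfl (by omega)] at r2
      push_cast at r2
      have t4 := t3 i (by omega) (by omega)
      have q1 := H.down 1 (a - 1) i (by omega) (by omega) (fun k h4 h5 => by
        rcases Nat.lt_or_ge k i with h | h
        · have : k = i - 1 := by omega
          subst this; omega
        · have := t3 k (by omega) h5
          omega) d (by omega) h2 (fun t h4 h5 => hl3 t (by omega) (by omega) (by omega))
      exact ⟨by omega, q1.2⟩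
    refine ⟨N + 1, 0, 0, l, l', by omega, by omega, by omega, by push_cast; exact H.a0,
      by push_cast; exact H.b0, by omega, by omega, hl2, hl2', by omega, ?_, ?_⟩
    · refine ⟨fun k hk => ?_, ?_, ?_, fun d hd1 hd2 => ⟨?_, ?_, fun k h1 h2 => ?_⟩⟩ <;>
        simp only [sY, eY] <;> split_ifs <;> push_cast <;> omega
    · refine ⟨fun k hk => ?_, ?_, ?_, fun d' hd1 hd2 => ?_⟩
      · have := g1 k hk
        have := hst k
        simp only [sY]; split_ifs <;> omega
      · simp only [sY]; split_ifs <;> push_cast <;> omega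
      · simp only [sY]; split_ifs <;> push_cast <;> omega
      · obtain ⟨t1, t2, t3⟩ := g4 d' hd1 hd2
        have t4 : d' ≤ i → E d' ≤ s (i - 1) := fun h => t3 (i - 1) (by omega) (by omega)
        have t5 := hslack d'
        have t6 := hslack' d'
        refine ⟨?_, ?_, fun k h1 h2 => ?_⟩
        · simp only [eY]; split_ifs <;> push_cast <;> omega
        · simp only [eY]; split_ifs <;> push_cast <;> omega
        · have u1 := t3 k h1 h2
          have u2 := hst k
          have u3 : l < d' → d' ≤ i → E d' + 1 ≤ s k := fun h3 h4 => (t5 h3 h4 hd1).2 k h1 h2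
          have u4 : l < d' → d' ≤ i → E d' + 1 ≤ s (i - 1) :=
            fun h3 h4 => (t5 h3 h4 hd1).2 (i - 1) (by omega) (by omega)
          have u5 : i < d' → E d' + 1 ≤ s k := fun h => hne' d' h hd2 k h1 h2
          have u6 : l' < d' → E d' + 2 ≤ s k := fun h => (t6 h hd2 hd1).2 k h1 h2
          simp only [eY, sY]; split_ifs <;> push_cast <;> omega
  · -- second case
    have hslack2 : ∀ d, l' < d → d ≤ i → 2 ≤ d → E d + 2 ≤ a := by
      intro d h1 h2 h3
      have z := hl3' i (by omega) (by omega) (by omega)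
      have r := H.Erec i hiN
      rw [z] at r
      push_cast at r
      have t1 := hslack' (i + 1) (by omega) (by omega) (by omega)
      have q0 := hslack' i (by omega) (by omega) (by omega)
      have q1 := H.down 2 (a - 2) i (by omega) (by omega) q0.2 d (by omega) h2
        (fun t h4 h5 => hl3' t (by omega) (by omega) (by omega))
      omega
    obtain ⟨l, hl1, hl2, hl3⟩ := exists_greatest (fun t => dv t - if t = l' then 1 else 0) l'
    have hl3x : ∀ k, l < k → k < l' → 2 ≤ k → dv k = 0 := by
      intro k h1 h2 h3
      have := hl3 k h1 (by omega) h3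
      simp only [if_neg (show ¬ k = l' by omega)] at this
      omega
    have hl3y : l < l' → 2 ≤ l' → dv l' = 1 := by
      intro h1 h3
      have := hl3 l' h1 le_rfl h3
      have := hl2' h3
      simp only [if_true] at *
      omega
    have hl2x : 2 ≤ l → 1 ≤ dv l := fun h => by have := hl2 h; omega
    have hl2y : 2 ≤ l → l = l' → 2 ≤ dv l := fun h h' => by
      have := hl2 h
      simp only [if_pos h'] at this; omega
    have hslack : ∀ d, l < d → d ≤ l' → 2 ≤ d →
        E d + 1 ≤ a ∧ ∀ k, d ≤ k + 1 → k ≤ N → E d + 1 ≤ s k := by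
      intro d h1 h2 h3
      have z := hl3y (by omega) (by omega)
      have r := H.Erec l' (by omega)
      rw [z] at r
      push_cast at r
      have r2 := H.srec (l' - 1) (by omega)
      rw [show l' - 1 + 1 = l' by omega] at r2
      obtain ⟨t1, t3⟩ := hslack' (l' + 1) (by omega) (by omega) (by omega)
      have t4 := t3 l' (by omega) (by omega)
      have t5 := hslack2 (l' + 1) (by omega)
      have t6 : E l' + 1 ≤ a := by
        rcases Nat.lt_or_ge l' i with h | h
        · have := t5 (by omega) (by omega); omega
        · have : l' = i := by omega
          subst this; omega
      have q1 := H.down 1 (a - 1) l' (by omega) (by omega) (fun k h4 h5 => by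
        rcases Nat.lt_or_ge k l' with h | h
        · have : k = l' - 1 := by omega
          subst this; omega
        · have := t3 k (by omega) h5
          omega) d (by omega) h2 (fun t h4 h5 => hl3x t (by omega) (by omega) (by omega))
      exact ⟨by omega, q1.2⟩
    refine ⟨N + 1, 0, 0, l, l', by omega, by omega, by omega, by push_cast; exact H.a0,
      by push_cast; exact H.b0, by omega, by omega, hl2x, hl2', hl2y, ?_, ?_⟩
    · refine ⟨fun k hk => ?_, ?_, ?_, fun d hd1 hd2 => ⟨?_, ?_, fun k h1 h2 => ?_⟩⟩ <;>
        simp only [sY, eY] <;> split_ifs <;> push_cast <;> omega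
    · refine ⟨fun k hk => ?_, ?_, ?_, fun d' hd1 hd2 => ?_⟩
      · have := g1 k hk
        have := hst k
        simp only [sY]; split_ifs <;> omega
      · simp only [sY]; split_ifs <;> push_cast <;> omega
      · simp only [sY]; split_ifs <;> push_cast <;> omega
      · obtain ⟨t1, t2, t3⟩ := g4 d' hd1 hd2
        have t4 : d' ≤ i → E d' ≤ s (i - 1) := fun h => t3 (i - 1) (by omega) (by omega)
        have t5 := hslack d'
        have t6 := hslack' d'
        have t7 := hslack2 d'
        refine ⟨?_, ?_, fun k h1 h2 => ?_⟩
        · simp only [eY]; split_ifs <;> push_cast <;> omega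
        · simp only [eY]; split_ifs <;> push_cast <;> omega
        · have u1 := t3 k h1 h2
          have u2 := hst k
          have u3 : l < d' → d' ≤ l' → E d' + 1 ≤ s k := fun h3 h4 => (t5 h3 h4 hd1).2 k h1 h2
          have u4 : l < d' → d' ≤ l' → E d' + 1 ≤ s (i - 1) :=
            fun h3 h4 => (t5 h3 h4 hd1).2 (i - 1) (by omega) (by omega)
          have u6 : l' < d' → E d' + 2 ≤ s k := fun h => (t6 h hd2 hd1).2 k h1 h2
          have u7 : l' < d' → d' ≤ i → E d' + 2 ≤ s (i - 1) :=
            fun h h' => (t6 h hd2 hd1).2 (i - 1) (by omega) (by omega)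
          simp only [eY, sY]; split_ifs <;> push_cast <;> omega

theorem core_small (H : Dat N i s E a b p q av dv mv) (hi : 1 ≤ i) (hiN : i ≤ N)
    (hmi : 1 ≤ mv i) : Concl N i s E a b p q av dv := by
  obtain ⟨j, hj1, hj2, hj3, hj4⟩ := exists_least av N i hi hiN
  obtain ⟨g1, g2, g3, g4⟩ := H.good
  by_cases hA : ∃ d, i < d ∧ d ≤ j ∧ E d = s (d - 1)
  · obtain ⟨d, h1, h2, h3⟩ := hA
    exact caseA H hi hiN hmi hj1 hj2 hj4 d h1 h2 h3
  push Not at hA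
  rcases Nat.lt_or_ge N j with hj | hj
  swap
  · exact caseB H hi hiN hmi hj1 hj (hj3 hj) hj4 hA
  have : j = N + 1 := by omega
  subst this
  have hst := H.s_strict hi hmi hj4
  have hp := H.p0
  have hq := H.q0
  have htop := H.Etop
  have ha0 := H.a0
  have hb0 := H.b0
  have hsN := hst N hiN (by omega) le_rfl
  have hs0 := g1 (i - 1) (by omega)
  have hlt : ∀ d, 2 ≤ d → d ≤ N + 1 → E d + 1 ≤ s N := by
    intro d h1 h2
    rcases Nat.lt_or_ge i d with h | h
    · have v1 := hA d h h2
      have v2 := (g4 d (by omega) h2).2.2 (d - 1) (by omega) (by omega)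
      have v3 := H.smono (d - 1) N (by omega) le_rfl (fun t w1 w2 => hj4 t (by omega) (by omega))
      omega
    · have := (g4 d h1 h2).2.2 (i - 1) (by omega) (by omega)
      omega
  have hEN := hlt (N + 1) (by omega) le_rfl
  by_cases c1 : a + 1 ≤ s N + p
  swap
  · exact caseC1 H hi hiN hmi hj4 hA 1 0 rfl (by push_cast; omega) (by push_cast; omega)
      (fun d h1 h2 => by have := hlt d h1 h2; push_cast; omega)
      (fun d h1 h2 => by have := (g4 d h1 h2).2.1; push_cast; omega) (by push_cast; omega)
      (by push_cast; omega)
  by_cases c2 : b + 1 ≤ s N + q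
  swap
  · exact caseC1 H hi hiN hmi hj4 hA 0 1 rfl (by push_cast; omega) (by push_cast; omega)
      (fun d h1 h2 => by have := (g4 d h1 h2).1; push_cast; omega)
      (fun d h1 h2 => by have := hlt d h1 h2; push_cast; omega) (by push_cast; omega)
      (by push_cast; omega)
  rcases lt_trichotomy a b with h | h | h
  · exact caseC1 H hi hiN hmi hj4 hA 0 1 rfl (by push_cast; omega) (by push_cast; omega)
      (fun d h1 h2 => by have := (g4 d h1 h2).1; push_cast; omega)
      (fun d h1 h2 => by have := (g4 d h1 h2).1; push_cast; omega) (by push_cast; omega)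
      (by push_cast; omega)
  · exact caseC2 H hi hiN hmi hj4 hA h c1 c2
  · exact caseC1 H hi hiN hmi hj4 hA 1 0 rfl (by push_cast; omega) (by push_cast; omega)
      (fun d h1 h2 => by have := (g4 d h1 h2).2.1; push_cast; omega)
      (fun d h1 h2 => by have := (g4 d h1 h2).2.1; push_cast; omega) (by push_cast; omega)
      (by push_cast; omega)

theorem core_spin (H : Dat N i s E a b p q av dv mv) (hi : i = N + 1 ∧ 1 ≤ p ∨ i = N + 2 ∧ 1 ≤ q) :
    Concl N i s E a b p q av dv := by
  obtain ⟨g1, g2, g3, g4⟩ := H.good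
  have hN := H.hN
  have hp := H.p0
  have hq := H.q0
  have htop := H.Etop
  have ha0 := H.a0
  have hb0 := H.b0
  have hsN := g1 N le_rfl
  obtain ⟨α, β, hα, hβ⟩ : ∃ α β : ℕ, α = (if i = N + 1 then 1 else 0) ∧
    β = (if i = N + 2 then 1 else 0) := ⟨_, _, rfl, rfl⟩
  have hc : (i = N + 1 ∧ α = 1 ∧ β = 0 ∧ 1 ≤ p) ∨ (i = N + 2 ∧ α = 0 ∧ β = 1 ∧ 1 ≤ q) := by
    rcases hi with ⟨h, h'⟩ | ⟨h, h'⟩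
    · left; rw [hα, hβ, if_pos h, if_neg (by omega)]; exact ⟨h, rfl, rfl, h'⟩
    · right; rw [hα, hβ, if_pos h, if_neg (by omega)]; exact ⟨h, rfl, rfl, h'⟩
  clear hα hβ hi
  by_cases hA : (α : ℤ) ≤ a ∧ (β : ℤ) ≤ b ∧ ∀ d, 2 ≤ d → d ≤ N + 1 → E d ≤ a - α ∧ E d ≤ b - β
  · obtain ⟨h1, h2, h3⟩ := hA
    refine ⟨N + 1, α, β, 0, 0, by omega, by omega, by omega, h1, h2, by omega, by omega,
      by omega, by omega, by omega, ?_, ?_⟩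
    · refine ⟨fun k hk => ?_, ?_, ?_, fun d hd1 hd2 => ⟨?_, ?_, fun k h1 h2 => ?_⟩⟩ <;>
        simp only [sY, eY] <;> split_ifs <;> push_cast <;> omega
    · refine ⟨fun k hk => ?_, ?_, ?_, fun d hd1 hd2 => ?_⟩
      · have := g1 k hk
        simp only [sY]; split_ifs <;> omega
      · simp only [sY]; split_ifs <;> omega
      · simp only [sY]; split_ifs <;> omega
      · have t := h3 d hd1 hd2
        refine ⟨?_, ?_, fun k h1 h2 => ?_⟩
        · simp only [eY]; split_ifs <;> omega
        · simp only [eY]; split_ifs <;> omega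
        · have := (g4 d hd1 hd2).2.2 k h1 h2
          simp only [eY, sY]; split_ifs <;> omega
  · have hσ : a + α ≤ s N + p ∧ b + β ≤ s N + q := by
      by_contra hcon
      apply hA
      refine ⟨by omega, by omega, fun d h1 h2 => ?_⟩
      obtain ⟨t1, t2, t3⟩ := g4 d h1 h2
      have t4 := t3 N (by omega) le_rfl
      omega
    obtain ⟨l, hl1, hl2, hl3⟩ := exists_greatest dv (N + 1)
    have hslack : ∀ d, l < d → d ≤ N + 1 → 2 ≤ d →
        E d + 1 ≤ a ∧ E d + 1 ≤ b ∧ ∀ k, d ≤ k + 1 → k ≤ N → E d + 1 ≤ s k := by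
      intro d h1 h2 h3
      have z := hl3 (N + 1) (by omega) le_rfl (by omega)
      rw [z] at htop
      push_cast at htop
      have q1 := H.down 1 (min a b - 1) (N + 1) le_rfl (by omega)
        (fun k h4 h5 => by
          have : k = N := by omega
          subst this
          omega) d (by omega) h2
        (fun t h4 h5 => hl3 t (by omega) (by omega) (by omega))
      exact ⟨by omega, by omega, q1.2⟩
    refine ⟨N + 1, 0, 0, l, 0, by omega, by omega, by omega, by push_cast; exact ha0,
      by push_cast; exact hb0, by omega, by omega, hl2, by omega, by omega, ?_, ?_⟩
    · refine ⟨fun k hk => ?_, ?_, ?_, fun d hd1 hd2 => ⟨?_, ?_, fun k h1 h2 => ?_⟩⟩ <;>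
        simp only [sY, eY] <;> split_ifs <;> push_cast <;> omega
    · refine ⟨fun k hk => ?_, ?_, ?_, fun d hd1 hd2 => ?_⟩
      · have := g1 k hk
        simp only [sY]; split_ifs <;> omega
      · simp only [sY]; split_ifs <;> omega
      · simp only [sY]; split_ifs <;> omega
      · have t := g4 d hd1 hd2
        have t' := hslack d
        refine ⟨?_, ?_, fun k h1 h2 => ?_⟩
        · simp only [eY]; split_ifs <;> omega
        · simp only [eY]; split_ifs <;> omega
        · have u := t.2.2 k h1 h2
          have u' : l < d → E d + 1 ≤ s k := fun h => (t' h hd2 hd1).2.2 k h1 h2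
          simp only [eY, sY]; split_ifs <;> omega
end

/-- Slack of the first family of inequalities. -/
def sF (m a : ℕ → ℕ) (k : ℕ) : ℤ := ∑ l ∈ Icc 1 k, ((m l : ℤ) - a l)

/-- The quantity bounded above in the second family of inequalities. -/
def eF (N : ℕ) (m a : ℕ → ℕ) (b : ℕ) (dv : ℕ → ℕ) (d : ℕ) : ℤ :=
  ∑ l ∈ Icc d (N + 1), (dv l : ℤ) + a (N + 1) + b - m (N + 1) - m (N + 2) - sF m a N
    - ∑ l ∈ Icc d N, (m l : ℤ)

theorem sum_split (f : ℕ → ℕ) (k K : ℕ) (h : k ≤ K) :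
    ∑ l ∈ Icc 1 K, f l = ∑ l ∈ Icc 1 k, f l + ∑ l ∈ Icc (k + 1) K, f l := by
  induction K, h using Nat.le_induction with
  | base => simp
  | succ K hK ih =>
    rw [Finset.sum_Icc_succ_top (by omega), Finset.sum_Icc_succ_top (by omega), ih, add_assoc]

theorem sum_bot (f : ℕ → ℕ) (d K : ℕ) (h : d ≤ K) :
    ∑ l ∈ Icc d K, f l = f d + ∑ l ∈ Icc (d + 1) K, f l := by
  rw [← Finset.add_sum_Ioc_eq_sum_Icc (f := f) h]
  congr 2
  ext t
  simp only [Finset.mem_Ioc, Finset.mem_Icc]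
  omega

theorem sF_eq (m a : ℕ → ℕ) (k : ℕ) :
    sF m a k = ((∑ l ∈ Icc 1 k, m l : ℕ) : ℤ) - (∑ l ∈ Icc 1 k, a l : ℕ) := by
  simp [sF, Finset.sum_sub_distrib]

theorem eF_eq (N : ℕ) (m a : ℕ → ℕ) (b : ℕ) (dv : ℕ → ℕ) (d : ℕ) :
    eF N m a b dv d = ((∑ l ∈ Icc d (N + 1), dv l : ℕ) : ℤ) + a (N + 1) + b - m (N + 1)
      - m (N + 2) - sF m a N - ((∑ l ∈ Icc d N, m l : ℕ) : ℤ) := by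
  simp [eF]

theorem mem_SD_iff (N : ℕ) (hN : 2 ≤ N) (m a : ℕ → ℕ) (b : ℕ) (dv : ℕ → ℕ) :
    (a, b, dv) ∈ SD (N + 2) m ↔ (∀ l, (l = 0 ∨ N + 1 < l) → a l = 0) ∧
      (∀ l, (l ≤ 1 ∨ N + 1 < l) → dv l = 0) ∧
      GoodS N (sF m a) (eF N m a b dv) (a (N + 1)) b (m (N + 1)) (m (N + 2)) := by
  have hA := Finset.sum_Icc_succ_top (show 1 ≤ N + 1 by omega) a
  have hM := Finset.sum_Icc_succ_top (show 1 ≤ N + 1 by omega) m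
  have hM2 := Finset.sum_Icc_succ_top (show 1 ≤ (N + 1) + 1 by omega) m
  rw [show N + 1 + 1 = N + 2 from rfl] at hM2
  have hMd : ∀ d, 2 ≤ d → d ≤ N + 1 →
      ∑ l ∈ Icc 1 N, m l = ∑ l ∈ Icc 1 (d - 1), m l + ∑ l ∈ Icc d N, m l := by
    intro d h1 h2
    have := sum_split m (d - 1) N (by omega)
    rwa [show d - 1 + 1 = d by omega] at this
  have hAk := fun k (h : k ≤ N) => sum_split a k (N + 1) (by omega)
  have htop : ∑ l ∈ Icc (N + 1) (N + 1), dv l = dv (N + 1) := by simp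
  have htop2 : ∑ l ∈ Icc (N + 1) N, m l = 0 := by simp
  have hs := sF_eq m a
  have hE := eF_eq N m a b dv
  simp only [SD, Set.mem_ofPred_eq, QD, GoodS, show N + 2 - 1 = N + 1 from rfl,
    show N + 2 - 2 = N from rfl]
  refine and_congr_right fun _ => and_congr_right fun _ => ?_
  constructor
  · rintro ⟨h1, h2, h3, h4, h5, h6, h7⟩
    have hsN := hs N
    have h1N := h1 (N + 1) (by omega) le_rfl
    refine ⟨fun k hk => ?_, by omega, by omega, fun d hd1 hd2 => ?_⟩
    · rcases Nat.eq_zero_or_pos k with h | h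
      · subst h; simp [sF]
      · have := h1 k h (by omega)
        have := hs k
        omega
    · have e := hE d
      have e2 := hMd d hd1 hd2
      refine ⟨?_, ?_, fun k hk1 hk2 => ?_⟩
      · rcases Nat.lt_or_ge N d with h | h
        · have : d = N + 1 := by omega
          subst this
          omega
        · have := h6 d hd1 h
          omega
      · rcases Nat.lt_or_ge N d with h | h
        · have : d = N + 1 := by omega
          subst this
          omega
        · have := h5 d hd1 h
          omega
      · have u1 := h7 d k hd1 hd2 (by omega) hk2
        have u2 := hs k
        have u3 := hAk k hk2
        omega
  · rintro ⟨h1, h2, h3, h4⟩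
    have hsN := hs N
    have top := h4 (N + 1) (by omega) le_rfl
    have eN := hE (N + 1)
    rw [htop, htop2] at eN
    refine ⟨fun j hj1 hj2 => ?_, by omega, by omega, by omega, fun d hd1 hd2 => ?_,
      fun d hd1 hd2 => ?_, fun d k hd1 hd2 hk1 hk2 => ?_⟩
    · rcases Nat.lt_or_ge N j with h | h
      · have : j = N + 1 := by omega
        subst this
        omega
      · have := h1 j h
        have := hs j
        omega
    · have e := hE d
      have e2 := hMd d hd1 (by omega)
      have e3 := h4 d hd1 (by omega)
      omega
    · have e := hE d
      have e2 := hMd d hd1 (by omega)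
      have e3 := h4 d hd1 (by omega)
      omega
    · have e := hE d
      have e2 := hMd d hd1 (by omega)
      have e3 := (h4 d hd1 (by omega)).2.2 k (by omega) hk2
      have u2 := hs k
      have u3 := hAk k hk2
      omega

theorem GoodS.congr {N : ℕ} {s s' E E' : ℕ → ℤ} {a b p q a' b' p' q' : ℤ}
    (h : GoodS N s E a b p q) (hs : ∀ k, k ≤ N → s' k = s k)
    (hE : ∀ d, 2 ≤ d → d ≤ N + 1 → E' d = E d) (ha : a' = a) (hb : b' = b) (hp : p' = p)
    (hq : q' = q) : GoodS N s' E' a' b' p' q' := by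
  subst ha hb hp hq
  obtain ⟨h1, h2, h3, h4⟩ := h
  refine ⟨fun k hk => by rw [hs k hk]; exact h1 k hk, by rw [hs N le_rfl]; exact h2,
    by rw [hs N le_rfl]; exact h3, fun d hd1 hd2 => ?_⟩
  obtain ⟨t1, t2, t3⟩ := h4 d hd1 hd2
  rw [hE d hd1 hd2]
  exact ⟨t1, t2, fun k h5 h6 => by rw [hs k h6]; exact t3 k h5 h6⟩

theorem sum_ind (u v c : ℕ) :
    ∑ l ∈ Icc u v, (if l = c then (1 : ℤ) else 0) = if u ≤ c ∧ c ≤ v then 1 else 0 := by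
  rw [Finset.sum_ite_eq']
  simp [Finset.mem_Icc]

/-- The `a`-part of the candidate. -/
def yA (N j α : ℕ) : ℕ → ℕ := fun l =>
  if l ≤ N then (if l = j then 1 else 0) else if l = N + 1 then α else 0

/-- The `d`-part of the candidate. -/
def yD (l l' : ℕ) : ℕ → ℕ := fun t =>
  if 2 ≤ t then (if t = l then 1 else 0) + (if t = l' then 1 else 0) else 0

theorem sF_y (N i j α k : ℕ) (hi : 1 ≤ i) (hj : 1 ≤ j) (hk : k ≤ N) :
    sF (unitVec i) (yA N j α) k = sY i j k := by
  have : sF (unitVec i) (yA N j α) k =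
      ∑ l ∈ Icc 1 k, ((if l = i then (1 : ℤ) else 0) - (if l = j then (1 : ℤ) else 0)) := by
    unfold sF
    refine Finset.sum_congr rfl fun l hl => ?_
    rw [Finset.mem_Icc] at hl
    simp only [unitVec, yA, if_pos (show l ≤ N by omega)]
    push_cast
    rfl
  rw [this, Finset.sum_sub_distrib, sum_ind, sum_ind]
  simp only [sY, hi, hj, true_and]

theorem eF_y (N i j α β l l' d : ℕ) (hi : 1 ≤ i) (hiN : i ≤ N + 2) (hj : 1 ≤ j) (hl : l ≤ N + 1)
    (hl' : l' ≤ N + 1) (hd : 2 ≤ d) :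
    eF N (unitVec i) (yA N j α) β (yD l l') d = eY N i j α β l l' d := by
  have h1 : ∑ t ∈ Icc d (N + 1), (yD l l' t : ℤ) =
      ∑ t ∈ Icc d (N + 1), ((if t = l then (1 : ℤ) else 0) + (if t = l' then (1 : ℤ) else 0)) := by
    refine Finset.sum_congr rfl fun t ht => ?_
    rw [Finset.mem_Icc] at ht
    simp only [yD, if_pos (show 2 ≤ t by omega)]
    push_cast
    rfl
  have h2 : ∑ t ∈ Icc d N, (unitVec i t : ℤ) = ∑ t ∈ Icc d N, (if t = i then (1 : ℤ) else 0) := by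
    refine Finset.sum_congr rfl fun t ht => ?_
    simp [unitVec]
  unfold eF
  rw [h1, h2, Finset.sum_add_distrib, sum_ind, sum_ind, sum_ind, sF_y N i j α N hi hj le_rfl]
  have h3 : yA N j α (N + 1) = α := by simp [yA]
  rw [h3]
  simp only [eY, sY, unitVec]
  push_cast
  split_ifs <;> omega

theorem SD_decomposition_aux (N : ℕ) (hN : 2 ≤ N) (m : ℕ → ℕ) (i : ℕ) (hi1 : 1 ≤ i)
    (hin : i ≤ N + 2) (hmi : 1 ≤ m i) (a : ℕ → ℕ) (b : ℕ) (dv : ℕ → ℕ)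
    (hx : (a, b, dv) ∈ SD (N + 2) m) :
    ∃ y ∈ SD (N + 2) (unitVec i), y ≤ (a, b, dv) ∧
      (a, b, dv) - y ∈ SD (N + 2) (m - unitVec i) := by
  rw [mem_SD_iff N hN] at hx
  obtain ⟨z1, z2, hg⟩ := hx
  have H : Dat N i (sF m a) (eF N m a b dv) (a (N + 1)) b (m (N + 1)) (m (N + 2)) a dv m := by
    refine ⟨hN, by simp [sF], fun k hk => ?_, fun d hd => ?_, ?_, by positivity, by positivity,
      by positivity, by positivity, hg⟩
    · simp only [sF]
      rw [Finset.sum_Icc_succ_top (by omega)]; ring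
    · have e1 := eF_eq N m a b dv d
      have e2 := eF_eq N m a b dv (d + 1)
      have e3 : ∑ l ∈ Icc d (N + 1), dv l = dv d + ∑ l ∈ Icc (d + 1) (N + 1), dv l :=
        sum_bot dv d (N + 1) (by omega)
      have e4 : ∑ l ∈ Icc d N, m l = m d + ∑ l ∈ Icc (d + 1) N, m l :=
        sum_bot m d N hd
      omega
    · rw [eF_eq]; simp
  have hC : Concl N i (sF m a) (eF N m a b dv) (a (N + 1)) b (m (N + 1)) (m (N + 2)) a dv := by
    rcases Nat.lt_or_ge N i with h | h
    · refine core_spin H ?_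
      have : i = N + 1 ∨ i = N + 2 := by omega
      rcases this with h | h
      · subst h; left; exact ⟨rfl, by omega⟩
      · subst h; right; exact ⟨rfl, by omega⟩
    · exact core_small H hi1 h hmi
  obtain ⟨j, α, β, l, l', j1, j2, j3, ha, hb, l1, l2, d1, d2, d3, G1, G2⟩ := hC
  have hya : ∀ t, yA N j α t ≤ a t := by
    intro t
    simp only [yA]
    split_ifs with c1 c2 c3
    · subst c2; exact j3 c1
    · omega
    · subst c3; omega
    · omega
  have hyd : ∀ t, yD l l' t ≤ dv t := by
    intro t
    simp only [yD]
    split_ifs with c1 c2 c3 c3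
    · subst c2; exact d3 c1 c3
    · subst c2; exact d1 c1
    · subst c3; have := d2 c1; omega
    · omega
    · omega
  have hym : ∀ t, unitVec i t ≤ m t := by
    intro t
    simp only [unitVec]
    split_ifs with c
    · subst c; exact hmi
    · omega
  have hyaN : yA N j α (N + 1) = α := by simp [yA]
  have hs : ∀ k, sF (m - unitVec i) (a - yA N j α) k
      = sF m a k - sF (unitVec i) (yA N j α) k := by
    intro k
    simp only [sF]
    rw [← Finset.sum_sub_distrib]
    refine Finset.sum_congr rfl fun t _ => ?_
    have := hya t
    have := hym t
    simp only [Pi.sub_apply]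
    omega
  refine ⟨(yA N j α, β, yD l l'), ?_, ⟨hya, by simp only; omega, hyd⟩, ?_⟩
  · rw [mem_SD_iff N hN]
    refine ⟨fun t ht => ?_, fun t ht => ?_, ?_⟩
    · have := hya t; have := z1 t ht; omega
    · have := hyd t; have := z2 t ht; omega
    · refine G1.congr (fun k hk => sF_y N i j α k hi1 j1 hk)
        (fun d h1 h2 => eF_y N i j α β l l' d hi1 hin j1 l1 l2 h1) (by rw [hyaN]) rfl ?_ ?_
      · simp only [unitVec]; split_ifs <;> omega
      · simp only [unitVec]; split_ifs <;> omega
  · change (a - yA N j α, b - β, dv - yD l l') ∈ SD (N + 2) (m - unitVec i)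
    rw [mem_SD_iff N hN]
    refine ⟨fun t ht => ?_, fun t ht => ?_, ?_⟩
    · have := z1 t ht; simp [this]
    · have := z2 t ht; simp [this]
    · have m1 := hym (N + 1)
      have m2 := hym (N + 2)
      have m3 := hya (N + 1)
      refine G2.congr (fun k hk => ?_) (fun d h1 h2 => ?_) ?_ ?_ ?_ ?_
      · rw [hs, sF_y N i j α k hi1 j1 hk]
      · rw [← eF_y N i j α β l l' d hi1 hin j1 l1 l2 h1]
        have q1 : ∑ t ∈ Icc d (N + 1), (((dv - yD l l') t : ℕ) : ℤ) =
            ∑ t ∈ Icc d (N + 1), (dv t : ℤ) - ∑ t ∈ Icc d (N + 1), (yD l l' t : ℤ) := by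
          rw [← Finset.sum_sub_distrib]
          refine Finset.sum_congr rfl fun t _ => ?_
          have := hyd t
          simp only [Pi.sub_apply]; omega
        have q2 : ∑ t ∈ Icc d N, (((m - unitVec i) t : ℕ) : ℤ) =
            ∑ t ∈ Icc d N, (m t : ℤ) - ∑ t ∈ Icc d N, (unitVec i t : ℤ) := by
          rw [← Finset.sum_sub_distrib]
          refine Finset.sum_congr rfl fun t _ => ?_
          have := hym t
          simp only [Pi.sub_apply]; omega
        have q3 := hs N
        simp only [eF]
        rw [q1, q2, q3]
        simp only [Pi.sub_apply]
        omega
      · simp only [Pi.sub_apply]; omega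
      · omega
      · simp only [Pi.sub_apply]
        have : (unitVec i (N + 1) : ℤ) = if i = N + 1 then 1 else 0 := by
          simp only [unitVec]; split_ifs <;> omega
        omega
      · simp only [Pi.sub_apply]
        have : (unitVec i (N + 2) : ℤ) = if i = N + 2 then 1 else 0 := by
          simp only [unitVec]; split_ifs <;> omega
        omega

/-- Decomposition property in type `D`: any point of `S_D(m)` with `m_i ≥ 1` can be reduced
by a point of `S_D(e_i)` to a point of `S_D(m - e_i)`. -/
theorem SD_decomposition (n : ℕ) (hn : 4 ≤ n) (m : ℕ → ℕ) (i : ℕ) (hi1 : 1 ≤ i) (hin : i ≤ n)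
    (hmi : 1 ≤ m i) (x : (ℕ → ℕ) × ℕ × (ℕ → ℕ)) (hx : x ∈ SD n m) :
    ∃ y ∈ SD n (unitVec i), y ≤ x ∧ x - y ∈ SD n (m - unitVec i) := by
  obtain ⟨N, rfl⟩ : ∃ N, n = N + 2 := ⟨n - 2, by omega⟩
  obtain ⟨a, b, dv⟩ := x
  exact SD_decomposition_aux N (by omega) m i hi1 hin hmi a b dv hx
end
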